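/- arXiv:2307.10027 — 2 statements merged into one kernel-verified Lean document; each statement's English description precedes it below -/
import Mathlib

section
/- (Symmetrization.) For every f ∈ 𝓑, there exists f^s ∈ 𝓑₊ such that Γ_{0,1}(f^s) = Γ_{0,1}(f) and A_{0,1}(f^s) ≥ A_{0,1}(f). -/
/-!
The parabola `c·t(1-t)` with `c ≥ 0` is a nonnegative concave bridge with `Γ = c²/3` and
`A = c/6`. Hence the theorem follows, with `c = √(3Γ(f))`, from the isoperimetric inequality
`A(f) ≤ √(Γ(f)/12)` for every bridge `f` (`area_le`).

To prove the latter, let `h = f′ ∈ L²([0,1])` and let `p` be the element of least norm in the closed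
convex set of `g ∈ L²` with `∫₀¹ g = 0` and `∫₀ᵗ g ≥ f(t)` for all `t` (an obstacle problem,
`obstacle`). The variational inequality for `p`, tested against tent functions, says that the
primitive of `p` is concave, so that it dominates the least concave majorant of `f`; tested against
`h` itself it gives `‖p‖² ≤ ⟨h, p⟩`. The same construction for `-f` gives `q`, whose negated
primitive lies below the greatest convex minorant. These two norm inequalities say that `p` and `q`
lie in the balls of radius `‖h‖/2` about `h/2` and `-h/2`, so `‖p + q‖ ≤ ‖h‖` (`norm_add_le_of`).
Finally `A(f)` is at most the integral of the primitive of `p + q`, which by Fubini equals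
`⟨1/2 - t, p + q⟩` because `p + q` has mean zero, and `‖1/2 - t‖² = 1/12`.
-/

open MeasureTheory Filter Set
open scoped ENNReal

noncomputable section

namespace DidoLIL

/-- `f ∈ 𝓐^x`: `f : [0,x] → ℝ` is absolutely continuous with `f 0 = 0` and
`∫₀ˣ f′(u)² du < ∞`.  Absolute continuity is encoded by the fundamental theorem of
calculus: `f` is the integral of its (a.e.) derivative, which is integrable, and the
square of the derivative is integrable (`Γ_{0,x}(f) < ∞`). -/
def MemA (x : ℝ) (f : ℝ → ℝ) : Prop :=
  f 0 = 0 ∧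
  MeasureTheory.IntegrableOn (deriv f) (Set.Icc 0 x) ∧
  (∀ t ∈ Set.Icc (0:ℝ) x, f t = ∫ s in (0:ℝ)..t, deriv f s) ∧
  MeasureTheory.IntegrableOn (fun u => (deriv f u) ^ 2) (Set.Icc 0 x)

/-- The least concave majorant of `f` on `[0,x]`: the pointwise infimum of all functions
concave on `[0,x]` that dominate `f` there. -/
def concMaj (x : ℝ) (f : ℝ → ℝ) (u : ℝ) : ℝ :=
  sInf {y : ℝ | ∃ g : ℝ → ℝ, ConcaveOn ℝ (Set.Icc 0 x) g ∧
    (∀ t ∈ Set.Icc (0:ℝ) x, f t ≤ g t) ∧ y = g u}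

/-- The greatest convex minorant of `f` on `[0,x]`: the pointwise supremum of all functions
convex on `[0,x]` that are dominated by `f` there. -/
def convMin (x : ℝ) (f : ℝ → ℝ) (u : ℝ) : ℝ :=
  sSup {y : ℝ | ∃ g : ℝ → ℝ, ConvexOn ℝ (Set.Icc 0 x) g ∧
    (∀ t ∈ Set.Icc (0:ℝ) x, g t ≤ f t) ∧ y = g u}

/-- `A_{0,x}(f) = ∫₀ˣ (f̄(u) − f̲(u)) du`. -/
def AreaF (x : ℝ) (f : ℝ → ℝ) : ℝ :=
  ∫ u in Set.Icc (0:ℝ) x, (concMaj x f u - convMin x f u)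

/-- `Γ_{0,x}(f) = ∫₀ˣ f′(u)² du`. -/
def GammaF (x : ℝ) (f : ℝ → ℝ) : ℝ :=
  ∫ u in Set.Icc (0:ℝ) x, (deriv f u) ^ 2

end DidoLIL

namespace DidoLIL

open scoped RealInnerProductSpace

/-! ### The obstacle problem in a Hilbert space -/

/-- The obstacle problem in an abstract Hilbert space, where `e t` plays the role of `1_{[0,t]}`, so
that `t ↦ ⟪e t, g⟫` is the primitive of `g`. Among the bridges above that of `h`, the one of least
norm is concave. -/
theorem obstacle {E : Type*} [NormedAddCommGroup E] [InnerProductSpace ℝ E] [CompleteSpace E]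
    (e : ℝ → E)
    (he : ∀ s ∈ Icc (0:ℝ) 1, ∀ t ∈ Icc (0:ℝ) 1, ⟪e s, e t⟫ = min s t)
    (h : E) (h1 : ⟪e 1, h⟫ = 0) :
    ∃ p : E, ⟪e 1, p⟫ = 0 ∧ ConcaveOn ℝ (Icc (0:ℝ) 1) (fun t => ⟪e t, p⟫) ∧
      (∀ t ∈ Icc (0:ℝ) 1, ⟪e t, h⟫ ≤ ⟪e t, p⟫) ∧ ‖p‖ ^ 2 ≤ ⟪h, p⟫ := by
  set K : Set E := {p | ⟪e 1, p⟫ = 0 ∧ ∀ t ∈ Icc (0:ℝ) 1, ⟪e t, h⟫ ≤ ⟪e t, p⟫} with hK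
  have hKh : h ∈ K := ⟨h1, fun t _ => le_rfl⟩
  have hconv : Convex ℝ K := by
    intro x hx y hy a b ha hb hab
    refine ⟨?_, fun t ht => ?_⟩
    · rw [inner_add_right, inner_smul_right, inner_smul_right, hx.1, hy.1]; simp
    · rw [inner_add_right, inner_smul_right, inner_smul_right]
      have := mul_le_mul_of_nonneg_left (hx.2 t ht) ha
      have := mul_le_mul_of_nonneg_left (hy.2 t ht) hb
      have h3 : ⟪e t, h⟫ = a * ⟪e t, h⟫ + b * ⟪e t, h⟫ := by rw [← add_mul, hab, one_mul]
      linarith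
  have hclosed : IsClosed K := by
    have : K = {p | ⟪e 1, p⟫ = 0} ∩ ⋂ t ∈ Icc (0:ℝ) 1, {p | ⟪e t, h⟫ ≤ ⟪e t, p⟫} := by
      ext p; simp [hK]
    rw [this]
    refine (isClosed_eq (by fun_prop) (by fun_prop)).inter ?_
    exact isClosed_biInter fun t _ => isClosed_le (by fun_prop) (by fun_prop)
  obtain ⟨p, hpK, hp⟩ :=
    exists_norm_eq_iInf_of_complete_convex ⟨h, hKh⟩ hclosed.isComplete hconv (0 : E)
  have hvar := (norm_eq_iInf_iff_real_inner_le_zero hconv hpK).1 hp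
  have hvar' : ∀ w ∈ K, 0 ≤ ⟪p, w - p⟫ := fun w hw => by
    have := hvar w hw
    rw [zero_sub, inner_neg_left] at this
    linarith
  refine ⟨p, hpK.1, ?_, hpK.2, ?_⟩
  · refine concaveOn_of_slope_anti_adjacent (convex_Icc 0 1) ?_
    intro a b c ha hc hab hbc
    have hb : b ∈ Icc (0:ℝ) 1 := ⟨ha.1.trans hab.le, hbc.le.trans hc.2⟩
    have hab' : 0 < b - a := sub_pos.2 hab
    have hbc' : 0 < c - b := sub_pos.2 hbc
    -- `v` is the derivative of a tent function supported on `[a, c]` with apex at `b`.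
    set v : E := (1 / (b - a)) • (e b - e a) - (1 / (c - b)) • (e c - e b) with hv
    have hev : ∀ t ∈ Icc (0:ℝ) 1, ⟪e t, v⟫ =
        (min t b - min t a) / (b - a) - (min t c - min t b) / (c - b) := fun t ht => by
      rw [hv, inner_sub_right, inner_smul_right, inner_smul_right, inner_sub_right,
        inner_sub_right, he t ht b hb, he t ht a ha, he t ht c hc]
      ring
    have hvK : p + v ∈ K := by
      refine ⟨?_, fun t ht => ?_⟩
      · rw [inner_add_right, hpK.1, hev 1 ⟨zero_le_one, le_rfl⟩, min_eq_right hb.2,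
          min_eq_right ha.2, min_eq_right hc.2, div_self hab'.ne', div_self hbc'.ne']
        simp
      · rw [inner_add_right, hev t ht]
        have h0 : 0 ≤ (min t b - min t a) / (b - a) - (min t c - min t b) / (c - b) := by
          rw [sub_nonneg, div_le_div_iff₀ hbc' hab']
          rcases le_total t b with h | h
          · rw [min_eq_left h, min_eq_left (h.trans hbc.le), sub_self, zero_mul]
            exact mul_nonneg (sub_nonneg.2 (min_le_left _ _)) hbc'.le
          · rw [min_eq_right h, min_eq_right (hab.le.trans h), mul_comm]
            exact mul_le_mul_of_nonneg_left (sub_le_sub_right (min_le_right _ _) _) hab'.le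
        linarith [hpK.2 t ht]
    have h4 := hvar' _ hvK
    rw [add_sub_cancel_left, real_inner_comm, hv, inner_sub_left, inner_smul_left,
      inner_smul_left, inner_sub_left, inner_sub_left] at h4
    simp only [conj_trivial] at h4
    simp only [div_eq_inv_mul]
    simp only [one_div] at h4
    linarith
  · have := hvar' h hKh
    rw [inner_sub_right, real_inner_self_eq_norm_sq, real_inner_comm] at this
    linarith

/-- The hypotheses place `p` and `q` in the balls of radius `‖h‖/2` about `h/2` and `-h/2`. -/
theorem norm_add_le_of {E : Type*} [NormedAddCommGroup E] [InnerProductSpace ℝ E]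
    (h p q : E) (hp : ‖p‖ ^ 2 ≤ ⟪h, p⟫) (hq : ‖q‖ ^ 2 ≤ ⟪-h, q⟫) : ‖p + q‖ ≤ ‖h‖ := by
  have h1 : ‖p - (1/2 : ℝ) • h‖ ≤ ‖h‖ / 2 := by
    refine abs_le_of_sq_le_sq' ?_ (by positivity) |>.2
    rw [norm_sub_sq_real, inner_smul_right, norm_smul, real_inner_comm]
    norm_num
    nlinarith
  have h2 : ‖q + (1/2 : ℝ) • h‖ ≤ ‖h‖ / 2 := by
    refine abs_le_of_sq_le_sq' ?_ (by positivity) |>.2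
    rw [inner_neg_left] at hq
    rw [norm_add_sq_real, inner_smul_right, norm_smul, real_inner_comm]
    norm_num
    nlinarith
  have h3 : p + q = (p - (1/2 : ℝ) • h) + (q + (1/2 : ℝ) • h) := by abel
  rw [h3]
  exact (norm_add_le _ _).trans (by linarith)

/-! ### Primitives of functions in `L²([0,1])` -/

/-- Lebesgue measure on `[0,1]`. -/
abbrev unitVol : Measure ℝ := volume.restrict (Icc (0:ℝ) 1)

/-- The class of `1_{[0,t]}` in `L²([0,1])`. -/
def stepL2 (t : ℝ) : Lp ℝ 2 unitVol :=
  indicatorConstLp 2 (measurableSet_Iic : MeasurableSet (Iic t)) (measure_ne_top _ _) (1:ℝ)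

theorem inner_stepL2_stepL2 {s t : ℝ} (hs : s ∈ Icc (0:ℝ) 1) (ht : t ∈ Icc (0:ℝ) 1) :
    ⟪stepL2 s, stepL2 t⟫ = min s t := by
  rw [stepL2, stepL2, L2.real_inner_indicatorConstLp_one_indicatorConstLp_one, Iic_inter_Iic,
    measureReal_restrict_apply measurableSet_Iic]
  have : Iic (s ⊓ t) ∩ Icc 0 1 = Icc 0 (min s t) := by
    ext x
    simp only [mem_inter_iff, mem_Iic, mem_Icc]
    have := min_le_left s t
    have := hs.2
    constructor
    · rintro ⟨h1, h2, _⟩; exact ⟨h2, h1⟩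
    · rintro ⟨h1, h2⟩; exact ⟨h2, h1, by linarith⟩
  rw [this, Real.volume_real_Icc_of_le (le_min hs.1 ht.1), sub_zero]

theorem inner_stepL2 (t : ℝ) (r : Lp ℝ 2 unitVol) :
    ⟪stepL2 t, r⟫ = ∫ s, (Iic t).indicator r s ∂unitVol := by
  rw [stepL2, L2.inner_indicatorConstLp_one, integral_indicator measurableSet_Iic]

theorem integrable_triangle (r : Lp ℝ 2 unitVol) :
    Integrable (Function.uncurry fun t s : ℝ => (Iic t).indicator r s)
      (unitVol.prod unitVol) := by
  have hr : Integrable r unitVol := (Lp.memLp r).integrable one_le_two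
  have h1 : Integrable (fun z : ℝ × ℝ => r z.2) (unitVol.prod unitVol) := hr.comp_snd unitVol
  have h2 := h1.indicator (measurableSet_le measurable_snd measurable_fst :
    MeasurableSet {z : ℝ × ℝ | z.2 ≤ z.1})
  refine h2.congr (Eventually.of_forall fun z => ?_)
  by_cases hz : z.2 ≤ z.1 <;> simp [Function.uncurry, Set.indicator, hz]

theorem integrable_primitive (r : Lp ℝ 2 unitVol) :
    Integrable (fun t => ⟪stepL2 t, r⟫) unitVol := by
  simp_rw [inner_stepL2]
  exact (integrable_triangle r).integral_prod_left

/-- Fubini on the triangle `s ≤ t`. -/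
theorem integral_primitive (r : Lp ℝ 2 unitVol) :
    ∫ t, ⟪stepL2 t, r⟫ ∂unitVol = ∫ s, (1 - s) * r s ∂unitVol := by
  simp_rw [inner_stepL2]
  rw [integral_integral_swap (integrable_triangle r)]
  refine setIntegral_congr_fun measurableSet_Icc fun s hs => ?_
  have h1 : ∀ t : ℝ, (Iic t).indicator r s = (Ici s).indicator (fun _ => r s) t := fun t => by
    by_cases h : s ≤ t <;> simp [Set.indicator, h]
  simp_rw [h1]
  rw [integral_indicator measurableSet_Ici, setIntegral_const,
    measureReal_restrict_apply measurableSet_Ici]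
  have : Ici s ∩ Icc 0 1 = Icc s 1 := by
    ext x
    simp only [mem_inter_iff, mem_Ici, mem_Icc]
    exact ⟨fun h => ⟨h.1, h.2.2⟩, fun h => ⟨h.1, hs.1.trans h.1, h.2⟩⟩
  rw [this, Real.volume_real_Icc_of_le hs.2, smul_eq_mul]

theorem memLp_ramp : MemLp (fun s : ℝ => 1 / 2 - s) 2 unitVol := by
  have hc : Continuous (fun s : ℝ => 1 / 2 - s) := by fun_prop
  rw [memLp_two_iff_integrable_sq hc.aestronglyMeasurable]
  exact (hc.pow 2).continuousOn.integrableOn_Icc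

theorem norm_toLp_sq {g : ℝ → ℝ} (hg : MemLp g 2 unitVol) :
    ‖hg.toLp g‖ ^ 2 = ∫ u in Icc (0:ℝ) 1, g u ^ 2 := by
  rw [← real_inner_self_eq_norm_sq, L2.inner_def]
  refine integral_congr_ae (hg.coeFn_toLp.mono fun x hx => ?_)
  simp [hx, pow_two]

theorem integral_Icc_eq {g : ℝ → ℝ} : ∫ u in Icc (0:ℝ) 1, g u = ∫ u in (0:ℝ)..1, g u := by
  rw [intervalIntegral.integral_of_le zero_le_one, integral_Icc_eq_integral_Ioc]

theorem norm_ramp_sq : ‖memLp_ramp.toLp‖ ^ 2 = 1 / 12 := by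
  rw [norm_toLp_sq, integral_Icc_eq]
  rw [intervalIntegral.integral_comp_sub_left (fun x : ℝ => x ^ 2), integral_pow]
  norm_num

/-- The primitive of a mean-zero `r` has integral `⟪1/2 - s, r⟫`; the bound is Cauchy–Schwarz. -/
theorem integral_primitive_le (r : Lp ℝ 2 unitVol) (hr : ⟪stepL2 1, r⟫ = 0) :
    ∫ t, ⟪stepL2 t, r⟫ ∂unitVol ≤ ‖memLp_ramp.toLp‖ * ‖r‖ := by
  have hri : Integrable r unitVol := (Lp.memLp r).integrable one_le_two
  have h0 : ∫ s, r s ∂unitVol = 0 := by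
    rw [← hr, inner_stepL2]
    refine setIntegral_congr_fun measurableSet_Icc fun s hs => ?_
    simp [Set.indicator, hs.2]
  have h1 : ⟪memLp_ramp.toLp, r⟫ = ∫ s, (1 / 2 - s) * r s ∂unitVol := by
    rw [L2.inner_def]
    refine integral_congr_ae (memLp_ramp.coeFn_toLp.mono fun x hx => ?_)
    simp only [hx]
    simp [mul_comm]
  have h2 : Integrable (fun s => (1 / 2 - s) * r s) unitVol :=
    memLp_ramp.integrable_mul (Lp.memLp r)
  have h3 : ∫ s, (1 - s) * r s ∂unitVol = ∫ s, (1 / 2 - s) * r s ∂unitVol := by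
    have : ∀ s, (1 - s) * r s = (1 / 2 - s) * r s + (1 / 2) * r s := fun s => by ring
    simp_rw [this]
    rw [integral_add h2 (hri.const_mul _), integral_const_mul, h0]
    simp
  rw [integral_primitive, h3, ← h1]
  exact real_inner_le_norm _ _

/-! ### The isoperimetric inequality for bridges -/

/-- A concave majorant `g₀` makes the set defining `concMaj` nonempty, so that its infimum is not the
junk value. -/
theorem le_concMaj {x u : ℝ} {f : ℝ → ℝ} (hu : u ∈ Icc 0 x) {g₀ : ℝ → ℝ}
    (hg₀ : ConcaveOn ℝ (Icc 0 x) g₀) (hfg₀ : ∀ t ∈ Icc (0:ℝ) x, f t ≤ g₀ t) :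
    f u ≤ concMaj x f u ∧ concMaj x f u ≤ g₀ u := by
  have hb : ∀ y ∈ {y : ℝ | ∃ g : ℝ → ℝ, ConcaveOn ℝ (Set.Icc 0 x) g ∧
    (∀ t ∈ Set.Icc (0:ℝ) x, f t ≤ g t) ∧ y = g u}, f u ≤ y := by
    rintro y ⟨g, -, hg, rfl⟩
    exact hg u hu
  exact ⟨le_csInf ⟨_, g₀, hg₀, hfg₀, rfl⟩ hb, csInf_le ⟨_, hb⟩ ⟨g₀, hg₀, hfg₀, rfl⟩⟩

/-- A convex minorant `g₀` makes the set defining `convMin` nonempty, so that its supremum is not the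
junk value. -/
theorem convMin_le {x u : ℝ} {f : ℝ → ℝ} (hu : u ∈ Icc 0 x) {g₀ : ℝ → ℝ}
    (hg₀ : ConvexOn ℝ (Icc 0 x) g₀) (hfg₀ : ∀ t ∈ Icc (0:ℝ) x, g₀ t ≤ f t) :
    g₀ u ≤ convMin x f u ∧ convMin x f u ≤ f u := by
  have hb : ∀ y ∈ {y : ℝ | ∃ g : ℝ → ℝ, ConvexOn ℝ (Set.Icc 0 x) g ∧
    (∀ t ∈ Set.Icc (0:ℝ) x, g t ≤ f t) ∧ y = g u}, y ≤ f u := by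
    rintro y ⟨g, -, hg, rfl⟩
    exact hg u hu
  exact ⟨le_csSup ⟨_, hb⟩ ⟨g₀, hg₀, hfg₀, rfl⟩, csSup_le ⟨_, g₀, hg₀, hfg₀, rfl⟩ hb⟩

/-- The isoperimetric inequality for bridges; equality holds for parabolas. -/
theorem area_le (f : ℝ → ℝ) (hf : MemA 1 f) (hbridge : f 1 = 0) :
    AreaF 1 f ≤ √(3 * GammaF 1 f) / 6 := by
  obtain ⟨-, hint, hftc, hsq⟩ := hf
  have hmem : MemLp (deriv f) 2 unitVol := by
    rw [memLp_two_iff_integrable_sq hint.aestronglyMeasurable]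
    exact hsq
  set h := hmem.toLp with hh
  have heh : ∀ t ∈ Icc (0:ℝ) 1, ⟪stepL2 t, h⟫ = f t := fun t ht => by
    rw [stepL2, L2.inner_indicatorConstLp_one, hftc t ht, intervalIntegral.integral_of_le ht.1,
      setIntegral_congr_ae measurableSet_Iic (hmem.coeFn_toLp.mono fun x hx _ => hx),
      Measure.restrict_restrict measurableSet_Iic, ← integral_Icc_eq_integral_Ioc]
    congr 2
    ext x
    simp only [mem_inter_iff, mem_Iic, mem_Icc]
    exact ⟨fun h => ⟨h.2.1, h.1⟩, fun h => ⟨h.2, h.1, h.2.trans ht.2⟩⟩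
  have h01 : (1:ℝ) ∈ Icc (0:ℝ) 1 := ⟨zero_le_one, le_rfl⟩
  have he : ∀ s ∈ Icc (0:ℝ) 1, ∀ t ∈ Icc (0:ℝ) 1, ⟪stepL2 s, stepL2 t⟫ = min s t :=
    fun s hs t ht => inner_stepL2_stepL2 hs ht
  have hh1 : ⟪stepL2 1, h⟫ = 0 := by rw [heh 1 h01, hbridge]
  obtain ⟨p, hp1, hpc, hpf, hpn⟩ := obstacle stepL2 he h hh1
  obtain ⟨q, hq1, hqc, hqf, hqn⟩ := obstacle stepL2 he (-h) (by rw [inner_neg_right, hh1, neg_zero])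
  have hnorm := norm_add_le_of h p q hpn hqn
  have hup : ∀ u ∈ Icc (0:ℝ) 1, f u ≤ concMaj 1 f u ∧ concMaj 1 f u ≤ ⟪stepL2 u, p⟫ :=
    fun u hu => le_concMaj hu hpc fun t ht => by rw [← heh t ht]; exact hpf t ht
  have hlo : ∀ u ∈ Icc (0:ℝ) 1, -⟪stepL2 u, q⟫ ≤ convMin 1 f u ∧ convMin 1 f u ≤ f u :=
    fun u hu => convMin_le hu hqc.neg fun t ht => by
      have := hqf t ht
      rw [inner_neg_right, heh t ht] at this
      simp only [Pi.neg_apply]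
      linarith
  -- Nonnegativity of the smaller integrand makes its measurability unnecessary.
  have hA : AreaF 1 f ≤ ∫ t, ⟪stepL2 t, p + q⟫ ∂unitVol := by
    refine integral_mono_of_nonneg ?_ (integrable_primitive _) ?_
    · filter_upwards [ae_restrict_mem measurableSet_Icc] with u hu
      simp only [Pi.zero_apply]
      linarith [(hup u hu).1, (hlo u hu).2]
    · filter_upwards [ae_restrict_mem measurableSet_Icc] with u hu
      rw [inner_add_right]
      linarith [(hup u hu).2, (hlo u hu).1]
  have hB := integral_primitive_le (p + q) (by rw [inner_add_right, hp1, hq1, add_zero])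
  have hC : ‖memLp_ramp.toLp‖ * ‖p + q‖ ≤ ‖memLp_ramp.toLp‖ * ‖h‖ :=
    mul_le_mul_of_nonneg_left hnorm (norm_nonneg _)
  refine (hA.trans (hB.trans hC)).trans ?_
  rw [le_div_iff₀ (by norm_num)]
  refine Real.le_sqrt_of_sq_le ?_
  rw [mul_pow, mul_pow, norm_ramp_sq, norm_toLp_sq, GammaF]
  apply le_of_eq; ring

/-! ### The extremal parabola -/

/-- The extremal parabola `c·t(1-t)`. -/
def parabola (c t : ℝ) : ℝ := c * (t * (1 - t))

theorem deriv_parabola (c : ℝ) : deriv (parabola c) = fun t => c * (1 - 2 * t) := by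
  funext t
  have h : HasDerivAt (parabola c) (c * (1 * (1 - t) + t * (-1))) t :=
    (((hasDerivAt_id t).mul ((hasDerivAt_id t).const_sub 1)).const_mul c)
  rw [h.deriv]; ring

theorem parabola_memA (c : ℝ) : MemA 1 (parabola c) := by
  have hc : Continuous fun t : ℝ => c * (1 - 2 * t) := by fun_prop
  have hd : Differentiable ℝ (parabola c) := by unfold parabola; fun_prop
  refine ⟨by simp [parabola], ?_, fun t _ => ?_, ?_⟩
  · rw [deriv_parabola]; exact hc.continuousOn.integrableOn_Icc
  · rw [intervalIntegral.integral_deriv_eq_sub (fun x _ => hd x)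
      (by rw [deriv_parabola]; exact hc.intervalIntegrable _ _)]
    simp [parabola]
  · rw [deriv_parabola]; exact (hc.pow 2).continuousOn.integrableOn_Icc

theorem gamma_parabola (c : ℝ) : GammaF 1 (parabola c) = c ^ 2 / 3 := by
  rw [GammaF, deriv_parabola, integral_Icc_eq]
  have : ∀ u : ℝ, HasDerivAt (fun u : ℝ => c ^ 2 * (u - 2 * u ^ 2 + 4 / 3 * u ^ 3))
      ((c * (1 - 2 * u)) ^ 2) u := fun u => by
    have := ((((hasDerivAt_id u).sub ((hasDerivAt_pow 2 u).const_mul 2)).add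
      ((hasDerivAt_pow 3 u).const_mul (4/3))).const_mul (c ^ 2))
    refine this.congr_deriv ?_
    norm_num; ring
  rw [intervalIntegral.integral_eq_sub_of_hasDerivAt (fun u _ => this u)
    (Continuous.intervalIntegrable (by fun_prop) _ _)]
  norm_num; ring

theorem parabola_nonneg {c : ℝ} (hc : 0 ≤ c) {u : ℝ} (hu : u ∈ Icc (0:ℝ) 1) :
    0 ≤ parabola c u :=
  mul_nonneg hc (mul_nonneg hu.1 (sub_nonneg.2 hu.2))

theorem parabola_concave {c : ℝ} (hc : 0 ≤ c) : ConcaveOn ℝ (Icc (0:ℝ) 1) (parabola c) := by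
  refine ⟨convex_Icc 0 1, fun x _ y _ a b ha hb hab => ?_⟩
  obtain rfl : b = 1 - a := by linarith
  simp only [parabola, smul_eq_mul]
  have := mul_nonneg hc (mul_nonneg (mul_nonneg ha hb) (sq_nonneg (x - y)))
  nlinarith

theorem area_parabola {c : ℝ} (hc : 0 ≤ c) : AreaF 1 (parabola c) = c / 6 := by
  have h1 : AreaF 1 (parabola c) = ∫ u in Icc (0:ℝ) 1, parabola c u := by
    refine setIntegral_congr_fun measurableSet_Icc fun u hu => ?_
    have hup := le_concMaj hu (parabola_concave hc) (f := parabola c) fun t _ => le_rfl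
    have h0 : ConvexOn ℝ (Icc (0:ℝ) 1) (fun _ => (0:ℝ)) := convexOn_const 0 (convex_Icc 0 1)
    have hlo := (convMin_le hu h0 (f := parabola c) fun t ht => parabola_nonneg hc ht).1
    have hlo' : convMin 1 (parabola c) u ≤ 0 := by
      refine csSup_le ⟨_, _, h0, fun t ht => parabola_nonneg hc ht, rfl⟩ ?_
      rintro y ⟨g, hg, hgf, rfl⟩
      have e0 := hgf 0 (by simp)
      have e1 := hgf 1 (by simp)
      simp only [parabola, zero_mul, mul_zero, sub_self] at e0 e1
      have := hg.2 (left_mem_Icc.2 zero_le_one) (right_mem_Icc.2 zero_le_one)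
        (sub_nonneg.2 hu.2) hu.1 (by ring)
      simp only [smul_eq_mul, mul_zero, mul_one, zero_add] at this
      nlinarith [hu.1, hu.2]
    rw [le_antisymm hup.2 hup.1, le_antisymm hlo' hlo, sub_zero]
  have h2 : ∀ u : ℝ, HasDerivAt (fun u : ℝ => c * (u ^ 2 / 2 - u ^ 3 / 3)) (parabola c u) u :=
    fun u => by
      have := (((hasDerivAt_pow 2 u).div_const 2).sub
        ((hasDerivAt_pow 3 u).div_const 3)).const_mul c
      refine this.congr_deriv ?_
      rw [parabola]; push_cast; ring
  rw [h1, integral_Icc_eq, intervalIntegral.integral_eq_sub_of_hasDerivAt (fun u _ => h2 u)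
    (Continuous.intervalIntegrable (by unfold parabola; fun_prop) _ _)]
  norm_num; ring

/-- Proposition 5.6 of the paper (symmetrization). Every bridge `f ∈ 𝓑`
admits a nonnegative bridge `f^s ∈ 𝓑₊` with the same energy and at least the same area. -/
theorem symmetrization (f : ℝ → ℝ) (hf : MemA 1 f) (hbridge : f 1 = 0) :
    ∃ fs : ℝ → ℝ, MemA 1 fs ∧ fs 1 = 0 ∧ (∀ u ∈ Set.Icc (0:ℝ) 1, 0 ≤ fs u) ∧
      GammaF 1 fs = GammaF 1 f ∧ AreaF 1 f ≤ AreaF 1 fs := by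
  have hΓ : 0 ≤ GammaF 1 f := integral_nonneg fun u => sq_nonneg _
  have hc := Real.sqrt_nonneg (3 * GammaF 1 f)
  refine ⟨parabola √(3 * GammaF 1 f), parabola_memA _, by simp [parabola],
    fun u hu => parabola_nonneg hc hu, ?_, ?_⟩
  · rw [gamma_parabola, Real.sq_sqrt (by positivity)]
    ring
  · rw [area_parabola hc]
    exact area_le f hf hbridge

end DidoLIL
end
end

section
/- There exists an absolutely continuous f : [0,1] → ℝ with f(0) = 0 and ∫₀¹ f′(u)² du ≤ 1 such that the area (2-dimensional Lebesgue measure) of the convex hull of { (t, 𝔤_f(t)) : 0 ≤ t ≤ 1 } ⊂ ℝ² is at least √2 × 0.090435. Consequently the constant ϑ := (1/√2) · sup over all such f of this area satisfies ϑ ≥ 0.090435. -/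
/-!
Write `f = ∫ f'`.  The hull of the graph of `g = 𝔤_f` contains the region between the graph and the
chord from `(0, 0)` to `(1, g 1)`, so its area is at least `∫₀¹ (g t - t * g 1) dt`, which is a
*linear* functional of `f'`, namely `∫₀¹ f'(s) ((1 - s)/2 + s log s) ds`.  Projecting this kernel
onto quadratic polynomials gives a multiple of `30 s² - 38 s + 9`, and the choice
`f'(s) = (3/10) (30 s² - 38 s + 9)` has energy `93/100`.  Its running average exceeds the chord by
`t (1 - t) (23 - 15 t) / 20`, whose integral is `31/240 > √2 * 0.090435`.

For the bound on the supremum, the set of hull areas must be shown to be bounded: an energy of at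
most one forces `|f| ≤ ∫ (1 + f'²)/2 ≤ 1` on `[0, 1]`, hence `|𝔤_f| ≤ 1` there, and every hull lies in
a fixed ball.
-/

open MeasureTheory Filter Set
open scoped ENNReal

noncomputable section

namespace DidoLIL

/-- The running-average transform `𝔤_f(t) = (1/t)∫₀ᵗ f(s) ds` (with `𝔤_f(0) = 0`). -/
def runAvg (f : ℝ → ℝ) (t : ℝ) : ℝ := t⁻¹ * ∫ s in (0:ℝ)..t, f s

/-- A point of the plane `ℝ² = EuclideanSpace ℝ (Fin 2)`. -/
def planePt (a b : ℝ) : EuclideanSpace ℝ (Fin 2) :=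
  (EuclideanSpace.equiv (Fin 2) ℝ).symm ![a, b]

/-- The area of the space-time convex hull of the running average `𝔤_f` of `f`. -/
def comHullArea (f : ℝ → ℝ) : ℝ :=
  (MeasureTheory.volume
    (convexHull ℝ ((fun t => planePt t (runAvg f t)) '' Set.Icc (0:ℝ) 1))).toReal

/-- The test function: `(3/10)` times the antiderivative of `30 s² - 38 s + 9`. -/
def testFun (s : ℝ) : ℝ := 3 / 10 * (9 * s - 19 * s ^ 2 + 10 * s ^ 3)

lemma hasDerivAt_testFun (s : ℝ) :
    HasDerivAt testFun (3 / 10 * (9 - 38 * s + 30 * s ^ 2)) s := by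
  have h := ((((hasDerivAt_id s).const_mul 9).sub
    ((hasDerivAt_pow 2 s).const_mul 19)).add ((hasDerivAt_pow 3 s).const_mul 10)).const_mul
    (3 / 10 : ℝ)
  refine (h.congr_deriv ?_)
  simp
  ring

lemma deriv_testFun : deriv testFun = fun s => 3 / 10 * (9 - 38 * s + 30 * s ^ 2) :=
  funext fun s => (hasDerivAt_testFun s).deriv

lemma memA_testFun : MemA 1 testFun := by
  have hc : Continuous (deriv testFun) := by rw [deriv_testFun]; fun_prop
  refine ⟨by simp [testFun], hc.continuousOn.integrableOn_Icc, fun t _ => ?_,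
    (hc.pow 2).continuousOn.integrableOn_Icc⟩
  rw [intervalIntegral.integral_deriv_eq_sub
    (fun s _ => (hasDerivAt_testFun s).differentiableAt) (hc.intervalIntegrable _ _)]
  simp [testFun]

lemma integral_of_primitive {F φ : ℝ → ℝ} (hF : ∀ s, HasDerivAt F (φ s) s) (hφ : Continuous φ)
    (a b : ℝ) : ∫ s in a..b, φ s = F b - F a :=
  intervalIntegral.integral_eq_sub_of_hasDerivAt (fun s _ => hF s) (hφ.intervalIntegrable _ _)

lemma integral_poly (a b c d e t : ℝ) :
    ∫ s in (0:ℝ)..t, (a + b * s + c * s ^ 2 + d * s ^ 3 + e * s ^ 4) =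
      a * t + b / 2 * t ^ 2 + c / 3 * t ^ 3 + d / 4 * t ^ 4 + e / 5 * t ^ 5 := by
  have hF : ∀ s : ℝ, HasDerivAt
      (fun s : ℝ => a * s + b / 2 * s ^ 2 + c / 3 * s ^ 3 + d / 4 * s ^ 4 + e / 5 * s ^ 5)
      (a + b * s + c * s ^ 2 + d * s ^ 3 + e * s ^ 4) s := by
    intro s
    have h := (((((hasDerivAt_id s).const_mul a).add ((hasDerivAt_pow 2 s).const_mul (b / 2))).add
      ((hasDerivAt_pow 3 s).const_mul (c / 3))).add ((hasDerivAt_pow 4 s).const_mul (d / 4))).add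
      ((hasDerivAt_pow 5 s).const_mul (e / 5))
    refine h.congr_deriv ?_
    simp
    ring
  rw [integral_of_primitive hF (by fun_prop)]
  simp

lemma gammaF_testFun : GammaF 1 testFun ≤ 1 := by
  unfold GammaF
  rw [integral_Icc_eq_integral_Ioc, ← intervalIntegral.integral_of_le zero_le_one, deriv_testFun]
  have h := integral_poly (9 / 100 * 81) (9 / 100 * (-684)) (9 / 100 * 1984) (9 / 100 * (-2280))
    (9 / 100 * 900) 1
  rw [intervalIntegral.integral_congr (g := fun s : ℝ => 9 / 100 * 81 + 9 / 100 * (-684) * s +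
    9 / 100 * 1984 * s ^ 2 + 9 / 100 * (-2280) * s ^ 3 + 9 / 100 * 900 * s ^ 4)
    (fun s _ => by ring), h]
  norm_num

/-- The formula also holds at `t = 0`, where both sides vanish. -/
lemma runAvg_testFun (t : ℝ) :
    runAvg testFun t = 3 / 10 * (9 / 2 * t - 19 / 3 * t ^ 2 + 5 / 2 * t ^ 3) := by
  unfold runAvg
  have h := integral_poly 0 (27 / 10) (-57 / 10) 3 0 t
  rw [intervalIntegral.integral_congr (g := fun s : ℝ => 0 + 27 / 10 * s + -57 / 10 * s ^ 2 +
    3 * s ^ 3 + 0 * s ^ 4) (fun s _ => by simp only [testFun]; ring), h]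
  rcases eq_or_ne t 0 with rfl | ht
  · simp
  · field_simp
    ring

lemma planePt_combo (a b x y u v : ℝ) :
    a • planePt x y + b • planePt u v = planePt (a * x + b * u) (a * y + b * v) := by
  ext i
  fin_cases i <;> simp [planePt]

/-- If `φ` vanishes at `0`, the hull of its graph over `[0, 1]` contains every point between the
chord and the graph. -/
lemma mem_hull_of_between {φ : ℝ → ℝ} (h0 : φ 0 = 0) {t y : ℝ} (ht : t ∈ Icc (0:ℝ) 1)
    (h1 : t * φ 1 < y) (h2 : y < φ t) :
    planePt t y ∈ convexHull ℝ ((fun t => planePt t (φ t)) '' Icc (0:ℝ) 1) := by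
  have hconv := convex_convexHull ℝ ((fun t => planePt t (φ t)) '' Icc (0:ℝ) 1)
  have hsub := subset_convexHull ℝ ((fun t => planePt t (φ t)) '' Icc (0:ℝ) 1)
  have hp : ∀ s ∈ Icc (0:ℝ) 1,
      planePt s (φ s) ∈ convexHull ℝ ((fun t => planePt t (φ t)) '' Icc (0:ℝ) 1) :=
    fun s hs => hsub ⟨s, hs, rfl⟩
  have hchord := hconv (hp 0 (by simp)) (hp 1 (by simp)) (sub_nonneg.2 ht.2) ht.1 (by ring)
  rw [planePt_combo] at hchord
  have hd : 0 < φ t - t * φ 1 := by linarith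
  have key := hconv hchord (hp t ht) (a := (φ t - y) / (φ t - t * φ 1))
    (b := (y - t * φ 1) / (φ t - t * φ 1)) (div_nonneg (by linarith) hd.le)
    (div_nonneg (by linarith) hd.le) (by field_simp; ring)
  rw [planePt_combo, h0] at key
  convert key using 2
  · field_simp
    ring
  · field_simp
    ring

lemma norm_planePt_le {x y : ℝ} (hx : |x| ≤ 1) (hy : |y| ≤ 1) : ‖planePt x y‖ ≤ 2 := by
  rw [EuclideanSpace.norm_eq, Real.sqrt_le_left (by norm_num)]
  have h1 := sq_le_one_iff_abs_le_one x |>.2 hx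
  have h2 := sq_le_one_iff_abs_le_one y |>.2 hy
  simp [planePt]
  linarith

/-- The pointwise estimate `|f'| ≤ (1 + f'²)/2` replaces the Cauchy–Schwarz inequality. -/
lemma abs_le_one_of_memA {f : ℝ → ℝ} (hf : MemA 1 f) (hΓ : GammaF 1 f ≤ 1) {t : ℝ}
    (ht : t ∈ Icc (0:ℝ) 1) : |f t| ≤ 1 := by
  obtain ⟨-, hi, hint, hsq⟩ := hf
  have hone : IntegrableOn (fun _ : ℝ => (1:ℝ)) (Icc 0 1) := continuousOn_const.integrableOn_Icc
  have hsub : Ioc (0:ℝ) t ⊆ Icc 0 1 := fun x hx => ⟨hx.1.le, hx.2.trans ht.2⟩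
  rw [hint t ht, intervalIntegral.integral_of_le ht.1]
  calc |∫ s in Ioc 0 t, deriv f s| ≤ ∫ s in Ioc 0 t, |deriv f s| := abs_integral_le_integral_abs
    _ ≤ ∫ s in Icc 0 1, |deriv f s| :=
      setIntegral_mono_set hi.abs (ae_of_all _ fun _ => abs_nonneg _) hsub.eventuallyLE
    _ ≤ ∫ s in Icc (0:ℝ) 1, (1 / 2 : ℝ) * (1 + deriv f s ^ 2) := by
      refine integral_mono hi.abs ((hone.add hsq).const_mul _) fun s => ?_
      have := sq_nonneg (|deriv f s| - 1)
      have h2 := sq_abs (deriv f s)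
      dsimp only
      nlinarith
    _ = (1 / 2 : ℝ) * (1 + GammaF 1 f) := by
      rw [integral_const_mul, integral_add hone hsq]
      simp [GammaF]
    _ ≤ 1 := by linarith

lemma abs_runAvg_le_one {f : ℝ → ℝ} (hf : ∀ t ∈ Icc (0:ℝ) 1, |f t| ≤ 1) {t : ℝ}
    (ht : t ∈ Icc (0:ℝ) 1) : |runAvg f t| ≤ 1 := by
  have h := intervalIntegral.norm_integral_le_of_norm_le_const (f := f) (a := 0) (b := t) (C := 1)
    (fun x hx => by
      rw [uIoc_of_le ht.1] at hx
      exact hf x ⟨hx.1.le, hx.2.trans ht.2⟩)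
  rw [Real.norm_eq_abs, sub_zero, one_mul, abs_of_nonneg ht.1] at h
  rw [runAvg, abs_mul, abs_inv, abs_of_nonneg ht.1]
  exact inv_mul_le_one_of_le₀ h ht.1

lemma hull_subset_ball {f : ℝ → ℝ} (hf : MemA 1 f) (hΓ : GammaF 1 f ≤ 1) :
    convexHull ℝ ((fun t => planePt t (runAvg f t)) '' Icc (0:ℝ) 1) ⊆ Metric.closedBall 0 2 := by
  refine convexHull_min ?_ (convex_closedBall _ _)
  rintro _ ⟨t, ht, rfl⟩
  rw [mem_closedBall_zero_iff]
  exact norm_planePt_le (by rw [abs_of_nonneg ht.1]; exact ht.2)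
    (abs_runAvg_le_one (fun s hs => abs_le_one_of_memA hf hΓ hs) ht)

lemma volume_ball_ne_top :
    volume (Metric.closedBall (0 : EuclideanSpace ℝ (Fin 2)) 2) ≠ ∞ :=
  (isCompact_closedBall _ _).measure_lt_top.ne

lemma comHullArea_le {f : ℝ → ℝ} (hf : MemA 1 f) (hΓ : GammaF 1 f ≤ 1) :
    comHullArea f ≤ (volume (Metric.closedBall (0 : EuclideanSpace ℝ (Fin 2)) 2)).toReal :=
  ENNReal.toReal_mono volume_ball_ne_top (measure_mono (hull_subset_ball hf hΓ))

lemma comHullArea_testFun : 31 / 240 ≤ comHullArea testFun := by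
  have hg : Continuous (runAvg testFun) := by
    rw [funext runAvg_testFun]; fun_prop
  have hl : Continuous fun t : ℝ => t * runAvg testFun 1 := by fun_prop
  set R : Set (ℝ × ℝ) := regionBetween (fun t => t * runAvg testFun 1) (runAvg testFun) (Icc 0 1)
  have hR : MeasurableSet R := measurableSet_regionBetween hl.measurable hg.measurable
    measurableSet_Icc
  have hvol : volume R = ENNReal.ofReal (31 / 240) := by
    rw [Measure.volume_eq_prod, volume_regionBetween_eq_integral hl.continuousOn.integrableOn_Icc
      hg.continuousOn.integrableOn_Icc measurableSet_Icc, integral_Icc_eq_integral_Ioc,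
      ← intervalIntegral.integral_of_le zero_le_one]
    · have h := integral_poly 0 (23 / 20) (-38 / 20) (15 / 20) 0 1
      rw [intervalIntegral.integral_congr (g := fun s : ℝ => 0 + 23 / 20 * s + -38 / 20 * s ^ 2 +
        15 / 20 * s ^ 3 + 0 * s ^ 4)
        (fun s _ => by simp only [Pi.sub_apply, runAvg_testFun]; ring), h]
      norm_num
    · intro t ht
      simp only [runAvg_testFun]
      have := mul_nonneg (mul_nonneg ht.1 (sub_nonneg.2 ht.2))
        (show (0:ℝ) ≤ 23 - 15 * t by linarith [ht.2])
      linarith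
  have hmp : MeasurePreserving
      (fun p : EuclideanSpace ℝ (Fin 2) => MeasurableEquiv.finTwoArrow (WithLp.ofLp p))
      volume volume :=
    (volume_preserving_finTwoArrow ℝ).comp (PiLp.volume_preserving_ofLp (Fin 2))
  have hsub : (fun p : EuclideanSpace ℝ (Fin 2) => MeasurableEquiv.finTwoArrow (WithLp.ofLp p)) ⁻¹' R
      ⊆ convexHull ℝ ((fun t => planePt t (runAvg testFun t)) '' Icc (0:ℝ) 1) := by
    rintro p ⟨ht, h1, h2⟩
    have hp : p = planePt (p 0) (p 1) := by
      ext i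
      fin_cases i <;> simp [planePt]
    rw [hp]
    exact mem_hull_of_between (by simp [runAvg]) ht h1 h2
  have hle := measure_mono (μ := volume) hsub
  rw [hmp.measure_preimage hR.nullMeasurableSet, hvol] at hle
  refine (ENNReal.ofReal_le_iff_le_toReal ?_).1 hle
  exact measure_ne_top_of_subset (hull_subset_ball memA_testFun gammaF_testFun) volume_ball_ne_top

/-- Proposition A.1 of the paper. There is an admissible `f` whose
running-average space-time hull has area at least `√2 × 0.090435`; consequently the
constant `ϑ = (1/√2)·sup_f A(H(𝔤_f))` satisfies `ϑ ≥ 0.090435`. -/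
theorem com_area_constant_lower_bound :
    (∃ f : ℝ → ℝ, MemA 1 f ∧ GammaF 1 f ≤ 1 ∧
      Real.sqrt 2 * 0.090435 ≤ comHullArea f) ∧
    (0.090435 : ℝ) ≤ (1 / Real.sqrt 2) *
      sSup {a : ℝ | ∃ f : ℝ → ℝ, MemA 1 f ∧ GammaF 1 f ≤ 1 ∧ a = comHullArea f} := by
  have hs : Real.sqrt 2 * 0.090435 ≤ comHullArea testFun := by
    have h : Real.sqrt 2 ≤ 1.4143 := by
      rw [Real.sqrt_le_left (by norm_num)]
      norm_num
    have := comHullArea_testFun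
    norm_num at h ⊢
    linarith
  refine ⟨⟨testFun, memA_testFun, gammaF_testFun, hs⟩, ?_⟩
  have hbdd : BddAbove
      {a : ℝ | ∃ f : ℝ → ℝ, MemA 1 f ∧ GammaF 1 f ≤ 1 ∧ a = comHullArea f} := by
    refine ⟨(volume (Metric.closedBall (0 : EuclideanSpace ℝ (Fin 2)) 2)).toReal, ?_⟩
    rintro _ ⟨f, hf, hΓ, rfl⟩
    exact comHullArea_le hf hΓ
  have hle := hs.trans (le_csSup hbdd ⟨testFun, memA_testFun, gammaF_testFun, rfl⟩)
  rw [one_div, ← div_eq_inv_mul, le_div_iff₀ (by positivity)]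
  linarith

end DidoLIL
end
end
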